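/- FedProx limit for least squares: Let f_j(x) = (1/2)||A_j x - b_j||^2 with A_j in R^{n_j x d}, b_j in R^{n_j}, and stepsize s > 0. If the matrix sum_{j=1}^m ( I - (I + s*A_j^T A_j)^{-1} ) is invertible and the FedProx iterates converge, then their common limit is x*_FedProx = ( sum_{j=1}^m ( I - (I + s*A_j^T A_j)^{-1} ) )^{-1} * ( sum_{j=1}^m (A_j^T A_j + (1/s)*I)^{-1} A_j^T b_j ). -/

import Mathlib

open Matrix Finset Filter

/-!
The minimality condition defining `p = prox_{s f}(z)` has gradient form `∇f(p) = s⁻¹ (z - p)`. For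
`f(x) = ½‖A x - b‖²` this is the linear equation `(1 + s A†A) p = z + s A† b`, whose operator is
invertible because `A†A` is positive; so every proximal map is affine, in particular continuous.
Passing to the limit in the update, all devices share one limit `x*` with
`∑ₖ (x* - prox_{s fₖ}(x*)) = 0`, that is, `s` times the Moreau gradients at `x*` sum to zero.
Inserting the affine formula turns this into `S x* = ∑ₖ (Aₖ†Aₖ + s⁻¹)⁻¹ Aₖ† bₖ` with
`S = ∑ₖ (1 - (1 + s Aₖ†Aₖ)⁻¹)`.
-/

section RingInverse

open scoped Ring

theorem map_ringInverse {M N G : Type*} [MonoidWithZero M] [MonoidWithZero N] [FunLike G M N]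
    [MonoidWithZeroHomClass G M N] (g : G) [IsLocalHom g] (a : M) : g a⁻¹ʳ = (g a)⁻¹ʳ := by
  by_cases ha : IsUnit a
  · obtain ⟨u, rfl⟩ := ha
    rw [Ring.inverse_unit]
    exact (Ring.inverse_unit (Units.map (g : M →* N) u)).symm
  · rw [Ring.inverse_non_unit _ ha, map_zero,
      Ring.inverse_non_unit _ (mt (isUnit_of_map_unit g a) ha)]

variable {K R : Type*} [Semifield K] [Semiring R] [Algebra K R]

theorem ringInverse_smul (c : K) (a : R) : (c • a)⁻¹ʳ = c⁻¹ • a⁻¹ʳ := by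
  nontriviality R
  obtain rfl | hc := eq_or_ne c 0
  · simp
  rw [Algebra.smul_def, Ring.inverse_mul (.inl (hc.isUnit.map (algebraMap K R))),
    ← map_ringInverse, Ring.inverse_eq_inv, ← Algebra.commutes, ← Algebra.smul_def]

theorem ringInverse_add_inv_smul_one {s : K} (hs : s ≠ 0) (a : R) :
    (a + s⁻¹ • 1)⁻¹ʳ = s • (1 + s • a)⁻¹ʳ := by
  have hfactor : a + s⁻¹ • 1 = s⁻¹ • (1 + s • a) := by
    rw [smul_add, inv_smul_smul₀ hs, add_comm]
  rw [hfactor, ringInverse_smul, inv_inv]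

end RingInverse

theorem isUnit_one_add_of_isPositive {𝕜 E : Type*} [RCLike 𝕜] [NormedAddCommGroup E]
    [InnerProductSpace 𝕜 E] [CompleteSpace E] {T : E →L[𝕜] E} (hT : T.IsPositive) :
    IsUnit (1 + T) := by
  refine ContinuousLinearMap.isUnit_of_forall_le_norm_inner_map _ one_pos fun x => ?_
  calc ‖x‖ ^ 2 * ((1 : NNReal) : ℝ)
      ≤ ‖x‖ ^ 2 + RCLike.re (inner 𝕜 (T x) x) := by
        rw [NNReal.coe_one, mul_one]
        exact le_add_of_nonneg_right (hT.re_inner_nonneg_left x)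
    _ = RCLike.re (inner 𝕜 ((1 + T) x) x) := by
        rw [_root_.add_apply, one_apply_eq_self, inner_add_left, map_add, inner_self_eq_norm_sq]
    _ ≤ ‖inner 𝕜 ((1 + T) x) x‖ := RCLike.re_le_norm _

section Proximal

variable {E : Type*} [NormedAddCommGroup E] {f : E → ℝ} {s : ℝ} {z p g : E}

/-- `IsProx s f z p` says that `p` is a value at `z` of the proximal map `prox_{s f}`. It is a
relation because a minimizer of `f + (2s)⁻¹‖z - ·‖²` need not exist or be unique. Only `s ≠ 0` is
meaningful: at `s = 0` the junk value `(2 * s)⁻¹ = 0` removes the quadratic term. -/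
def IsProx (s : ℝ) (f : E → ℝ) (z p : E) : Prop :=
  ∀ u, f p + (2 * s)⁻¹ * ‖z - p‖ ^ 2 ≤ f u + (2 * s)⁻¹ * ‖z - u‖ ^ 2

variable [InnerProductSpace ℝ E] [CompleteSpace E]

theorem hasGradientAt_norm_sub_sq (z p : E) :
    HasGradientAt (fun u => ‖z - u‖ ^ 2) (-((2 : ℝ) • (z - p))) p := by
  rw [hasGradientAt_iff_hasFDerivAt]
  refine ((hasFDerivAt_id p).const_sub z).norm_sq.congr_fderiv ?_
  ext v
  simp [two_smul]

theorem IsProx.gradient_eq (hp : IsProx s f z p) (hf : HasGradientAt f g p) :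
    g = s⁻¹ • (z - p) := by
  have hmin : IsLocalMin (fun u => f u + (2 * s)⁻¹ * ‖z - u‖ ^ 2) p := Eventually.of_forall hp
  have hzero := hmin.hasFDerivAt_eq_zero
    (hf.hasFDerivAt.add ((hasGradientAt_norm_sub_sq z p).hasFDerivAt.const_mul (2 * s)⁻¹))
  rw [← map_smul, ← map_add, map_eq_zero_iff _ (InnerProductSpace.toDual ℝ E).injective] at hzero
  rw [eq_neg_of_add_eq_zero_left hzero, smul_neg, neg_neg, smul_smul, mul_inv, mul_right_comm,
    inv_mul_cancel₀ two_ne_zero, one_mul]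

theorem IsProx.add_smul_gradient_eq (hs : s ≠ 0) (hp : IsProx s f z p)
    (hf : HasGradientAt f g p) : p + s • g = z := by
  rw [hp.gradient_eq hf, smul_inv_smul₀ hs, add_sub_cancel]

end Proximal

section LeastSquares

open scoped Ring

variable {E F : Type*} [NormedAddCommGroup E] [InnerProductSpace ℝ E] [CompleteSpace E]
  [NormedAddCommGroup F] [InnerProductSpace ℝ F]

/-- The least-squares loss `½‖A x - b‖²` of a bounded operator `A`, one device's objective. -/
noncomputable def leastSquares (A : E →L[ℝ] F) (b : F) (x : E) : ℝ :=
  (1 / 2) * ‖A x - b‖ ^ 2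

variable [CompleteSpace F] (A : E →L[ℝ] F) (b : F) {s : ℝ} {z p : E}

theorem hasGradientAt_leastSquares (x : E) :
    HasGradientAt (leastSquares A b) (A.adjoint (A x - b)) x := by
  rw [hasGradientAt_iff_hasFDerivAt]
  refine ((A.hasFDerivAt.sub_const b).norm_sq.const_mul (1 / 2)).congr_fderiv ?_
  ext v
  simp [ContinuousLinearMap.adjoint_inner_left]

theorem isUnit_one_add_smul_adjoint_comp_self (hs : 0 ≤ s) :
    IsUnit (1 + s • (A.adjoint ∘L A)) :=
  isUnit_one_add_of_isPositive (A.isPositive_adjoint_comp_self.smul_of_nonneg hs)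

theorem IsProx.eq_ringInverse_apply (hs : 0 < s) (hp : IsProx s (leastSquares A b) z p) :
    p = (1 + s • (A.adjoint ∘L A))⁻¹ʳ (z + s • A.adjoint b) := by
  have hlinear : (1 + s • (A.adjoint ∘L A)) p = z + s • A.adjoint b := by
    rw [← hp.add_smul_gradient_eq hs.ne' (hasGradientAt_leastSquares A b p)]
    simp [smul_sub, add_assoc]
  rw [← hlinear, ← mul_apply_eq_comp,
    Ring.inverse_mul_cancel _ (isUnit_one_add_smul_adjoint_comp_self A hs.le),
    one_apply_eq_self]

end LeastSquares

section Averaging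

variable {𝕜 J E : Type*} [DivisionRing 𝕜] [CharZero 𝕜] [Fintype J] [AddCommGroup E] [Module 𝕜 E]
  [TopologicalSpace E] [ContinuousAdd E] [ContinuousConstSMul 𝕜 E] [T2Space E]

theorem sum_sub_apply_eq_zero_of_tendsto {T : J → E → E} (hT : ∀ k, Continuous (T k))
    {x : ℕ → J → E} (hx : ∀ t j, x (t + 1) j = (Fintype.card J : 𝕜)⁻¹ • ∑ k, T k (x t k))
    {xlim : J → E} (hlim : ∀ j, Tendsto (fun t => x t j) atTop (nhds (xlim j))) (j : J) :
    ∑ k, (xlim j - T k (xlim j)) = 0 := by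
  have haverage (i : J) : xlim i = (Fintype.card J : 𝕜)⁻¹ • ∑ k, T k (xlim k) := by
    refine tendsto_nhds_unique ((tendsto_add_atTop_iff_nat 1).2 (hlim i)) ?_
    simp only [hx]
    exact (tendsto_finsetSum _ fun k _ => ((hT k).tendsto _).comp (hlim k)).const_smul _
  have hcommon (k : J) : xlim k = xlim j := (haverage k).trans (haverage j).symm
  have hcard : (Fintype.card J : 𝕜) ≠ 0 :=
    Nat.cast_ne_zero.2 (Fintype.card_pos_iff.2 ⟨j⟩).ne'
  have hfixed := haverage j
  simp only [hcommon] at hfixed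
  rw [eq_inv_smul_iff₀ hcard, Nat.cast_smul_eq_nsmul] at hfixed
  rw [sum_sub_distrib, sum_const, card_univ, hfixed, sub_self]

end Averaging

open scoped Ring in
theorem fedprox_least_squares_limit_general
    {J E : Type*} [Fintype J] [NormedAddCommGroup E] [InnerProductSpace ℝ E] [CompleteSpace E]
    {F : J → Type*} [∀ j, NormedAddCommGroup (F j)] [∀ j, InnerProductSpace ℝ (F j)]
    [∀ j, CompleteSpace (F j)]
    (A : ∀ j, E →L[ℝ] F j) (b : ∀ j, F j) {s : ℝ} (hs : 0 < s) {prox : J → E → E}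
    (hprox : ∀ j z, IsProx s (leastSquares (A j) (b j)) z (prox j z)) {x : ℕ → J → E}
    (hupdate : ∀ t j, x (t + 1) j = (Fintype.card J : ℝ)⁻¹ • ∑ k, prox k (x t k))
    {xlim : J → E} (hconv : ∀ j, Tendsto (fun t => x t j) atTop (nhds (xlim j)))
    (hS : IsUnit (∑ j, (1 - (1 + s • ((A j).adjoint ∘L A j))⁻¹ʳ))) (j : J) :
    xlim j = (∑ k, (1 - (1 + s • ((A k).adjoint ∘L A k))⁻¹ʳ))⁻¹ʳ
      (∑ k, ((A k).adjoint ∘L A k + s⁻¹ • 1)⁻¹ʳ ((A k).adjoint (b k))) := by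
  have hformula (k : J) (z : E) := (hprox k z).eq_ringInverse_apply (A k) (b k) hs
  have hcont (k : J) : Continuous (prox k) := by
    rw [funext (hformula k)]
    fun_prop
  have hzero := sum_sub_apply_eq_zero_of_tendsto hcont hupdate hconv j
  have hlinear : (∑ k, (1 - (1 + s • ((A k).adjoint ∘L A k))⁻¹ʳ)) (xlim j)
      = ∑ k, ((A k).adjoint ∘L A k + s⁻¹ • 1)⁻¹ʳ ((A k).adjoint (b k)) := by
    rw [← sub_eq_zero, ← hzero, _root_.sum_apply, ← sum_sub_distrib]
    refine sum_congr rfl fun k _ => ?_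
    rw [hformula, ringInverse_add_inv_smul_one hs.ne']
    simp [sub_sub]
  rw [← hlinear, ← mul_apply_eq_comp, Ring.inverse_mul_cancel _ hS, one_apply_eq_self]

section Matrices

open scoped Ring

variable {m n : Type*} [Fintype m] [Fintype n] [DecidableEq m] [DecidableEq n]

theorem adjoint_toContinuousLinearMap_toEuclideanLin (A : Matrix m n ℝ) :
    (LinearMap.toContinuousLinearMap (toEuclideanLin A)).adjoint
      = LinearMap.toContinuousLinearMap (toEuclideanLin Aᵀ) := by
  rw [← conjTranspose_eq_transpose_of_trivial, toEuclideanLin_conjTranspose_eq_adjoint,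
    LinearMap.adjoint_toContinuousLinearMap]

variable {𝕜 : Type*} [RCLike 𝕜]

theorem toEuclideanCLM_mul_eq_comp (B : Matrix n m 𝕜) (A : Matrix m n 𝕜) :
    toEuclideanCLM (𝕜 := 𝕜) (B * A) = LinearMap.toContinuousLinearMap (toEuclideanLin B) ∘L
      LinearMap.toContinuousLinearMap (toEuclideanLin A) :=
  ContinuousLinearMap.coe_injective (toLpLin_mul_same 2 B A)

theorem toEuclideanCLM_inv (M : Matrix n n 𝕜) :
    toEuclideanCLM (𝕜 := 𝕜) M⁻¹ = (toEuclideanCLM (𝕜 := 𝕜) M)⁻¹ʳ := by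
  rw [nonsing_inv_eq_ringInverse, map_ringInverse]

end Matrices

/-- FedProx limit for least squares: for `f_j(x) = ½‖A_j x - b_j‖²` and stepsize `s > 0`, if
`∑_j (I - (I + s A_jᵀA_j)⁻¹)` is invertible and the FedProx iterates converge, then their
common limit is
`x*_FedProx = (∑_j (I - (I + s A_jᵀA_j)⁻¹))⁻¹ (∑_j (A_jᵀA_j + (1/s) I)⁻¹ A_jᵀ b_j)`. -/
theorem fedprox_least_squares_limit
    {d m : ℕ} (hm : 0 < m)
    (n : Fin m → ℕ)
    (A : ∀ j, Matrix (Fin (n j)) (Fin d) ℝ)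
    (b : ∀ j, EuclideanSpace ℝ (Fin (n j)))
    (s : ℝ) (hs : 0 < s)
    (f : Fin m → EuclideanSpace ℝ (Fin d) → ℝ)
    (hf : ∀ j x, f j x = (1 / 2) * ‖Matrix.toEuclideanLin (A j) x - b j‖ ^ 2)
    (prox : Fin m → EuclideanSpace ℝ (Fin d) → EuclideanSpace ℝ (Fin d))
    (hprox : ∀ j z u, f j (prox j z) + (2 * s)⁻¹ * ‖z - prox j z‖ ^ 2
        ≤ f j u + (2 * s)⁻¹ * ‖z - u‖ ^ 2)
    (x : ℕ → Fin m → EuclideanSpace ℝ (Fin d))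
    (hupdate : ∀ t j, x (t + 1) j = (m : ℝ)⁻¹ • ∑ k, prox k (x t k))
    (xlim : Fin m → EuclideanSpace ℝ (Fin d))
    (hconv : ∀ j, Tendsto (fun t => x t j) atTop (nhds (xlim j)))
    (S : Matrix (Fin d) (Fin d) ℝ)
    (hS : S = ∑ j, ((1 : Matrix (Fin d) (Fin d) ℝ)
      - ((1 : Matrix (Fin d) (Fin d) ℝ) + s • ((A j)ᵀ * A j))⁻¹))
    (hSinv : IsUnit S) :
    ∀ j, xlim j = Matrix.toEuclideanLin S⁻¹
      (∑ k, Matrix.toEuclideanLin (((A k)ᵀ * A k + s⁻¹ • (1 : Matrix (Fin d) (Fin d) ℝ))⁻¹)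
        (Matrix.toEuclideanLin (A k)ᵀ (b k))) := by
  have hsolve := fedprox_least_squares_limit_general
    (fun j => LinearMap.toContinuousLinearMap (toEuclideanLin (A j))) b hs
    (fun j z u => by simpa only [hf] using! hprox j z u)
    (by simpa only [Fintype.card_fin] using hupdate) hconv
  simp only [adjoint_toContinuousLinearMap_toEuclideanLin, ← toEuclideanCLM_mul_eq_comp,
    ← map_one (toEuclideanCLM (𝕜 := ℝ)), ← map_smul (toEuclideanCLM (𝕜 := ℝ)), ← map_add,
    ← toEuclideanCLM_inv, ← map_sub, ← map_sum (toEuclideanCLM (𝕜 := ℝ)), ← hS] at hsolve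
  exact hsolve (hSinv.map _)
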